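/- arXiv:1005.2048 — 2 statements merged into one kernel-verified Lean document; each statement's English description precedes it below -/
import Mathlib

section
/- Let E be a finite-dimensional complex vector space and f a function holomorphic on the complement U of finitely many hyperplanes in a neighborhood of 0 in E, with values in a finite-dimensional complex vector space. Suppose f is bounded on U and there exists a finite family of affine functions (l_i) on E such that the product of f with the product of the l_i extends holomorphically to a neighborhood of 0. Then f itself extends holomorphically to a neighborhood of 0 in E. -/
/-!
Near a point of the singular set `{h = 0}`, choose a complex line on which `h` does not vanish
identically, and on it a small circle avoiding `{h = 0}`. The average of `f` over the translate of
this circle to the centre `x` is analytic in `x`: the Taylor series of `f` at the points of the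
compact circle satisfy uniform bounds and can be integrated term by term. On each translated disc
`f` is a bounded function of one variable with isolated singularities, so Riemann's theorem and the
mean value property identify the average with `f x` whenever `h x ≠ 0`.
-/

open Filter Metric MeasureTheory Topology
open scoped NNReal ENNReal

section ChangeOrigin

variable {𝕜 E F : Type*} [NontriviallyNormedField 𝕜] [NormedAddCommGroup E] [NormedSpace 𝕜 E]
  [NormedAddCommGroup F] [NormedSpace 𝕜 F]

lemma exists_norm_changeOrigin_mul_pow_le {p : FormalMultilinearSeries 𝕜 E F} {s t : ℝ≥0}
    (h : (s + t : ℝ≥0∞) < p.radius) :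
    ∃ M : ℝ, ∀ w : E, ‖w‖₊ ≤ s → ∀ n, ‖p.changeOrigin w n‖ * t ^ n ≤ M := by
  have hsum := p.changeOriginSeries_summable_aux₁ h
  have hs : (s : ℝ≥0∞) < p.radius := lt_of_le_of_lt le_self_add h
  refine ⟨((∑' i : Σ k l : ℕ, { u : Finset (Fin (k + l)) // u.card = l },
    ‖p (i.1 + i.2.1)‖₊ * s ^ i.2.1 * t ^ i.1 : ℝ≥0) : ℝ), fun w hw n => ?_⟩
  have hw' : (‖w‖₊ : ℝ≥0∞) < p.radius := lt_of_le_of_lt (by exact_mod_cast hw) hs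
  have hcoeff : ‖p.changeOrigin w n‖₊ ≤
      ∑' i : Σ l : ℕ, { u : Finset (Fin (n + l)) // u.card = l }, ‖p (n + i.1)‖₊ * s ^ i.1 := by
    refine (p.nnnorm_changeOrigin_le n hw').trans ?_
    refine Summable.tsum_le_tsum (fun i => ?_) (p.changeOriginSeries_summable_aux₂ hw' n)
      (p.changeOriginSeries_summable_aux₂ hs n)
    gcongr
  have hterm : ‖p.changeOrigin w n‖₊ * t ^ n ≤ ∑' i : Σ k l : ℕ,
      { u : Finset (Fin (k + l)) // u.card = l }, ‖p (i.1 + i.2.1)‖₊ * s ^ i.2.1 * t ^ i.1 :=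
    calc ‖p.changeOrigin w n‖₊ * t ^ n
        ≤ ∑' i : Σ l : ℕ, { u : Finset (Fin (n + l)) // u.card = l },
            ‖p (n + i.1)‖₊ * s ^ i.1 * t ^ n := by
          rw [NNReal.tsum_mul_right]
          gcongr
      _ ≤ _ := by
          rw [hsum.tsum_sigma' fun k => (NNReal.summable_sigma.1 hsum).1 k]
          exact (NNReal.summable_sigma.1 hsum).2.le_tsum n fun _ _ => zero_le
  exact_mod_cast hterm

end ChangeOrigin

section TaylorSeries

variable {𝕜 E F : Type*} [RCLike 𝕜] [NormedAddCommGroup E] [NormedSpace 𝕜 E]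
  [NormedAddCommGroup F] [NormedSpace 𝕜 F] {f : E → F} {x : E}

variable (𝕜) in
/-- The Taylor series of `f` at `x`, as a formal multilinear series. Among the power series
representing `f` near `x` it is the one whose coefficients vary continuously with `x`. -/
noncomputable def taylorFPowerSeries (f : E → F) (x : E) : FormalMultilinearSeries 𝕜 E F :=
  fun n => (n.factorial : 𝕜)⁻¹ • iteratedFDeriv 𝕜 n f x

variable [CompleteSpace F]

lemma norm_taylorFPowerSeries_le {p : FormalMultilinearSeries 𝕜 E F} {r : ℝ≥0∞}
    (hp : HasFPowerSeriesOnBall f p x r) (n : ℕ) : ‖taylorFPowerSeries 𝕜 f x n‖ ≤ ‖p n‖ := by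
  have hbound : ‖iteratedFDeriv 𝕜 n f x‖ ≤ n.factorial * ‖p n‖ := by
    refine ContinuousMultilinearMap.opNorm_le_bound (by positivity) fun m => ?_
    rw [hp.iteratedFDeriv_eq_sum_of_completeSpace]
    calc ‖∑ σ : Equiv.Perm (Fin n), p n (fun i => m (σ i))‖
        ≤ ∑ σ : Equiv.Perm (Fin n), ‖p n‖ * ∏ i, ‖m (σ i)‖ :=
          norm_sum_le_of_le _ fun σ _ => (p n).le_opNorm _
      _ = n.factorial * ‖p n‖ * ∏ i, ‖m i‖ := by
          simp only [fun σ : Equiv.Perm (Fin n) => Equiv.prod_comp σ (fun i => ‖m i‖),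
            Finset.sum_const, Finset.card_univ, Fintype.card_perm, Fintype.card_fin,
            nsmul_eq_mul, mul_assoc]
  rw [taylorFPowerSeries, norm_smul, norm_inv, RCLike.norm_natCast]
  exact (inv_mul_le_iff₀ (by positivity)).2 hbound

lemma hasFPowerSeriesOnBall_taylorFPowerSeries {p : FormalMultilinearSeries 𝕜 E F} {r : ℝ≥0∞}
    (hp : HasFPowerSeriesOnBall f p x r) :
    HasFPowerSeriesOnBall f (taylorFPowerSeries 𝕜 f x) x r where
  r_le := hp.r_le.trans <|
    FormalMultilinearSeries.radius_le_of_le fun n => norm_taylorFPowerSeries_le hp n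
  r_pos := hp.r_pos
  hasSum := fun hy => hp.hasSum_iteratedFDeriv hy

lemma continuousOn_taylorFPowerSeries {s : Set E} (hf : AnalyticOnNhd 𝕜 f s) (n : ℕ) :
    ContinuousOn (fun x => taylorFPowerSeries 𝕜 f x n) s :=
  (hf.iteratedFDeriv n).continuousOn.const_smul (n.factorial : 𝕜)⁻¹

lemma exists_eventually_hasFPowerSeriesOnBall_taylorFPowerSeries (hf : AnalyticAt 𝕜 f x) :
    ∃ ε > (0 : ℝ≥0), ∃ M : ℝ, ∀ᶠ y in 𝓝 x,
      HasFPowerSeriesOnBall f (taylorFPowerSeries 𝕜 f y) y ε ∧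
        ∀ n, ‖taylorFPowerSeries 𝕜 f y n‖ * ε ^ n ≤ M := by
  obtain ⟨p, R, hp⟩ := hf
  obtain ⟨ε, hε, hεR⟩ : ∃ ε : ℝ≥0, 0 < ε ∧ (ε + ε : ℝ≥0∞) < R := by
    obtain ⟨t, ht, htR⟩ := ENNReal.lt_iff_exists_nnreal_btwn.1 hp.r_pos
    refine ⟨t / 2, by simpa using ht, ?_⟩
    rwa [← ENNReal.coe_add, add_halves]
  obtain ⟨M, hM⟩ := exists_norm_changeOrigin_mul_pow_le (hεR.trans_le hp.r_le)
  refine ⟨ε, hε, M, ?_⟩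
  filter_upwards [closedBall_mem_nhds x (NNReal.coe_pos.2 hε)] with y hy
  have hyε : ‖y - x‖₊ ≤ ε := by rwa [mem_closedBall_iff_norm] at hy
  have hyε' : (‖y - x‖₊ : ℝ≥0∞) ≤ ε := by exact_mod_cast hyε
  have hpy : HasFPowerSeriesOnBall f (p.changeOrigin (y - x)) y (R - ‖y - x‖₊) := by
    simpa only [add_sub_cancel] using
      hp.changeOrigin (hyε'.trans_lt (lt_of_le_of_lt le_self_add hεR))
  have hεle : (ε : ℝ≥0∞) ≤ R - ‖y - x‖₊ :=
    ENNReal.le_sub_of_add_le_left ENNReal.coe_ne_top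
      ((add_le_add_left hyε' _).trans hεR.le)
  refine ⟨(hasFPowerSeriesOnBall_taylorFPowerSeries hpy).mono (by simpa using hε) hεle,
    fun n => le_trans ?_ (hM _ hyε n)⟩
  gcongr
  exact norm_taylorFPowerSeries_le hpy n

lemma exists_forall_hasFPowerSeriesOnBall_taylorFPowerSeries {K : Set E} (hK : IsCompact K)
    (hf : AnalyticOnNhd 𝕜 f K) :
    ∃ ε > (0 : ℝ≥0), ∃ M : ℝ, ∀ y ∈ K,
      HasFPowerSeriesOnBall f (taylorFPowerSeries 𝕜 f y) y ε ∧
        ∀ n, ‖taylorFPowerSeries 𝕜 f y n‖ * ε ^ n ≤ M := by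
  refine hK.induction_on (p := fun s => ∃ ε > (0 : ℝ≥0), ∃ M : ℝ, ∀ y ∈ s,
    HasFPowerSeriesOnBall f (taylorFPowerSeries 𝕜 f y) y ε ∧
      ∀ n, ‖taylorFPowerSeries 𝕜 f y n‖ * ε ^ n ≤ M) ⟨1, one_pos, 0, by simp⟩ ?_ ?_ ?_
  · rintro s t hst ⟨ε, hε, M, h⟩
    exact ⟨ε, hε, M, fun y hy => h y (hst hy)⟩
  · rintro s t ⟨ε, hε, M, h⟩ ⟨ε', hε', M', h'⟩
    have hmin : 0 < min ε ε' := lt_min hε hε'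
    refine ⟨min ε ε', hmin, max M M', ?_⟩
    rintro y (hy | hy)
    · refine ⟨(h y hy).1.mono (by simpa using hmin) (by simp), fun n => ?_⟩
      refine le_trans ?_ (((h y hy).2 n).trans (le_max_left _ _))
      gcongr
      exact min_le_left _ _
    · refine ⟨(h' y hy).1.mono (by simpa using hmin) (by simp), fun n => ?_⟩
      refine le_trans ?_ (((h' y hy).2 n).trans (le_max_right _ _))
      gcongr
      exact min_le_right _ _
  · intro x hx
    obtain ⟨ε, hε, M, h⟩ := exists_eventually_hasFPowerSeriesOnBall_taylorFPowerSeries (hf x hx)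
    exact ⟨_, mem_nhdsWithin_of_mem_nhds h, ε, hε, M, fun y hy => hy⟩

end TaylorSeries

section Integral

variable {α F : Type*} [MeasurableSpace α] {μ : Measure α} [NormedAddCommGroup F]

lemma integrable_of_norm_mul_le {q : α → F} {M : α → ℝ} {c : ℝ} (hc : 0 < c)
    (hq : AEStronglyMeasurable q μ) (hM : ∀ᵐ a ∂μ, ‖q a‖ * c ≤ M a) (hM_int : Integrable M μ) :
    Integrable q μ := by
  refine (hM_int.div_const c).mono' hq ?_
  filter_upwards [hM] with a ha using (le_div_iff₀ hc).2 ha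

variable {𝕜 E : Type*} [RCLike 𝕜] [NormedAddCommGroup E] [NormedSpace 𝕜 E] [NormedSpace 𝕜 F]
  [NormedSpace ℝ F]

lemma hasSum_integral_apply_of_norm_mul_pow_le {p : α → FormalMultilinearSeries 𝕜 E F}
    {g : α → F} {M : α → ℝ} {r : ℝ} {y : E} (hr : 0 < r) (hy : ‖y‖ < r)
    (hp_meas : ∀ n, AEStronglyMeasurable (p · n) μ)
    (hM : ∀ᵐ a ∂μ, ∀ n, ‖p a n‖ * r ^ n ≤ M a) (hM_int : Integrable M μ)
    (hg : ∀ᵐ a ∂μ, HasSum (fun n => p a n fun _ => y) (g a)) :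
    HasSum (fun n => ∫ a, p a n (fun _ => y) ∂μ) (∫ a, g a ∂μ) := by
  have hgeom : ∀ a, HasSum (fun n => M a * (‖y‖ / r) ^ n) (M a * (1 - ‖y‖ / r)⁻¹) := fun a =>
    (hasSum_geometric_of_lt_one (by positivity) ((div_lt_one hr).2 hy)).mul_left (M a)
  refine hasSum_integral_of_dominated_convergence (fun n a => M a * (‖y‖ / r) ^ n)
    (fun n => ?_) (fun n => ?_) (.of_forall fun a => (hgeom a).summable) ?_ hg
  · exact (ContinuousMultilinearMap.apply 𝕜 (fun _ : Fin n => E) F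
      fun _ => y).continuous.comp_aestronglyMeasurable (hp_meas n)
  · filter_upwards [hM] with a ha
    calc ‖p a n fun _ => y‖ ≤ ‖p a n‖ * ‖y‖ ^ n := by
          simpa using (p a n).le_opNorm fun _ => y
      _ = ‖p a n‖ * r ^ n * (‖y‖ / r) ^ n := by
          rw [mul_assoc, ← mul_pow, mul_div_cancel₀ _ hr.ne']
      _ ≤ M a * (‖y‖ / r) ^ n := by
          gcongr
          exact ha n
  · simpa only [(hgeom _).tsum_eq] using hM_int.mul_const _

variable [SMulCommClass 𝕜 ℝ F]

lemma hasFPowerSeriesOnBall_integral {f : E → α → F} {p : α → FormalMultilinearSeries 𝕜 E F}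
    {x : E} {r : ℝ≥0} {M : α → ℝ} (hr : 0 < r)
    (hp : ∀ᵐ a ∂μ, HasFPowerSeriesOnBall (f · a) (p a) x r)
    (hp_meas : ∀ n, AEStronglyMeasurable (p · n) μ)
    (hM : ∀ᵐ a ∂μ, ∀ n, ‖p a n‖ * r ^ n ≤ M a) (hM_int : Integrable M μ) :
    HasFPowerSeriesOnBall (fun y => ∫ a, f y a ∂μ) (fun n => ∫ a, p a n ∂μ) x r where
  r_le := by
    refine FormalMultilinearSeries.le_radius_of_bound _ (∫ a, M a ∂μ) fun n => ?_
    calc ‖∫ a, p a n ∂μ‖ * (r : ℝ) ^ n ≤ (∫ a, ‖p a n‖ ∂μ) * (r : ℝ) ^ n := by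
          gcongr
          exact norm_integral_le_integral_norm _
      _ = ∫ a, ‖p a n‖ * (r : ℝ) ^ n ∂μ := (integral_mul_const _ _).symm
      _ ≤ ∫ a, M a ∂μ := by
          refine integral_mono_of_nonneg (.of_forall fun a => by positivity) hM_int ?_
          filter_upwards [hM] with a ha using ha n
  r_pos := by simpa using hr
  hasSum := by
    intro y hy
    have hp_int : ∀ n, Integrable (p · n) μ := fun n =>
      integrable_of_norm_mul_le (pow_pos (NNReal.coe_pos.2 hr) n) (hp_meas n)
        (hM.mono fun a ha => ha n) hM_int
    simp only [ContinuousMultilinearMap.integral_apply (hp_int _)]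
    refine hasSum_integral_apply_of_norm_mul_pow_le (NNReal.coe_pos.2 hr) (by simpa using hy)
      hp_meas hM hM_int ?_
    filter_upwards [hp] with a ha using ha.hasSum hy

lemma analyticAt_setIntegral_comp_add [CompleteSpace F] [TopologicalSpace α]
    [OpensMeasurableSpace α] {f : E → F} {γ : α → E} {K : Set α} {x : E} (hK : IsCompact K)
    (hK_meas : MeasurableSet K) (hμK : μ K ≠ ∞) (hγ : ContinuousOn γ K)
    (hf : ∀ a ∈ K, AnalyticAt 𝕜 f (x + γ a)) :
    AnalyticAt 𝕜 (fun y => ∫ a in K, f (y + γ a) ∂μ) x := by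
  have hγx : ContinuousOn (fun a => x + γ a) K := hγ.const_add x
  have hf_image : AnalyticOnNhd 𝕜 f ((fun a => x + γ a) '' K) := Set.forall_mem_image.2 hf
  obtain ⟨ε, hε, M, hM⟩ := exists_forall_hasFPowerSeriesOnBall_taylorFPowerSeries
    (hK.image_of_continuousOn hγx) hf_image
  rw [Set.forall_mem_image] at hM
  refine (hasFPowerSeriesOnBall_integral (p := fun a => taylorFPowerSeries 𝕜 f (x + γ a))
    (M := fun _ => M) hε ?_ (fun n => ?_) ?_ (integrableOn_const hμK)).analyticAt
  · filter_upwards [ae_restrict_mem hK_meas] with a ha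
    simpa using (hM ha).1.comp_sub (-γ a)
  · exact ((continuousOn_taylorFPowerSeries hf_image n).comp hγx
      (Set.mapsTo_image _ _)).aestronglyMeasurable_of_isCompact hK hK_meas
  · filter_upwards [ae_restrict_mem hK_meas] with a ha using (hM ha).2

end Integral

section CircleAverage

variable {E F : Type*} [NormedAddCommGroup E] [NormedSpace ℂ E] [NormedAddCommGroup F]
  [NormedSpace ℂ F] [CompleteSpace F]

lemma analyticAt_circleAverage_comp_add_smul {f : E → F} {x v : E} {c : ℂ} {ρ : ℝ}
    (hf : ∀ z ∈ sphere c |ρ|, AnalyticAt ℂ f (x + z • v)) :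
    AnalyticAt ℂ (fun y => Real.circleAverage (fun z => f (y + z • v)) c ρ) x := by
  have hint : AnalyticAt ℂ
      (fun y => ∫ θ in Set.Icc 0 (2 * Real.pi), f (y + circleMap c ρ θ • v)) x :=
    analyticAt_setIntegral_comp_add isCompact_Icc measurableSet_Icc measure_Icc_lt_top.ne
      (by fun_prop) fun θ _ => hf _ (circleMap_mem_sphere' c ρ θ)
  refine (hint.const_smul (c := (2 * Real.pi)⁻¹)).congr (.of_forall fun y => ?_)
  simp only [Real.circleAverage, Pi.smul_apply,
    intervalIntegral.integral_of_le Real.two_pi_pos.le, integral_Icc_eq_integral_Ioc]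

end CircleAverage

section OneVariable

variable {F : Type*} [NormedAddCommGroup F] [NormedSpace ℂ F] [CompleteSpace F] {w : ℂ → F}

lemma differentiableAt_limUnder_nhdsNE {z : ℂ} (hd : ∀ᶠ y in 𝓝[≠] z, DifferentiableAt ℂ w y)
    (hb : IsBoundedUnder (· ≤ ·) (𝓝[≠] z) fun y => ‖w y‖) :
    DifferentiableAt ℂ (fun y => limUnder (𝓝[≠] y) w) z := by
  set W : ℂ → F := fun y => limUnder (𝓝[≠] y) w
  have hWw : W =ᶠ[𝓝[≠] z] w := by
    filter_upwards [hd] with y hy using (hy.continuousAt.mono_left nhdsWithin_le_nhds).limUnder_eq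
  have hWd : ∀ᶠ y in 𝓝[≠] z, DifferentiableAt ℂ W y := by
    filter_upwards [eventually_eventually_nhdsWithin.2 hWw, hd, self_mem_nhdsWithin]
      with y hy hdy hyz
    rw [isOpen_compl_singleton.nhdsWithin_eq hyz] at hy
    exact hdy.congr_of_eventuallyEq hy
  have hWc : ContinuousAt W z := by
    obtain ⟨C, hC⟩ := hb
    rw [← continuousWithinAt_compl_self]
    refine (Complex.tendsto_limUnder_of_differentiable_on_punctured_nhds_of_bounded_under hd
      ⟨C + ‖w z‖, ?_⟩).congr' hWw.symm
    exact (eventually_map.1 hC).mono fun y hy => norm_sub_le_of_le hy le_rfl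
  exact (Complex.analyticAt_of_differentiable_on_punctured_nhds_of_continuousAt
    hWd hWc).differentiableAt

lemma circleAverage_eq_of_bounded_nhdsNE {c : ℂ} {ρ : ℝ}
    (hd : ∀ z ∈ closedBall c |ρ|, ∀ᶠ y in 𝓝[≠] z, DifferentiableAt ℂ w y)
    (hb : ∀ z ∈ closedBall c |ρ|, IsBoundedUnder (· ≤ ·) (𝓝[≠] z) fun y => ‖w y‖)
    (hc : ContinuousAt w c) (hs : ∀ z ∈ sphere c |ρ|, ContinuousAt w z) :
    Real.circleAverage w c ρ = w c := by
  have hWw : ∀ z, ContinuousAt w z → limUnder (𝓝[≠] z) w = w z := fun z hz =>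
    (hz.mono_left nhdsWithin_le_nhds).limUnder_eq
  have hWd : DifferentiableOn ℂ (fun z => limUnder (𝓝[≠] z) w) (closedBall c |ρ|) := fun z hz =>
    (differentiableAt_limUnder_nhdsNE (hd z hz) (hb z hz)).differentiableWithinAt
  calc Real.circleAverage w c ρ
      = Real.circleAverage (fun z => limUnder (𝓝[≠] z) w) c ρ :=
        Real.circleAverage_congr_sphere fun z hz => (hWw z (hs z hz)).symm
    _ = limUnder (𝓝[≠] c) w := (hWd.diffContOnCl_ball subset_rfl).circleAverage
    _ = w c := hWw c hc

end OneVariable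

section ZeroSet

variable {𝕜 F : Type*} [NontriviallyNormedField 𝕜] [NormedAddCommGroup F] [NormedSpace 𝕜 F]

lemma eventually_nhdsNE_ne_zero_of_isPreconnected {u : 𝕜 → F} {s : Set 𝕜}
    (hu : AnalyticOnNhd 𝕜 u s) (hs : IsPreconnected s) {z₀ z : 𝕜} (hz₀ : z₀ ∈ s)
    (huz₀ : u z₀ ≠ 0) (hz : z ∈ s) : ∀ᶠ y in 𝓝[≠] z, u y ≠ 0 :=
  (hu z hz).eventually_eq_zero_or_eventually_ne_zero.resolve_left fun h0 =>
    huz₀ (hu.eqOn_zero_of_preconnected_of_eventuallyEq_zero hs hz h0 hz₀)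

variable {E : Type*} [NormedAddCommGroup E] [NormedSpace 𝕜 E]

lemma analyticAt_continuousAffineMap (u : E →ᴬ[𝕜] F) (x : E) : AnalyticAt 𝕜 u x :=
  u.contDiff.contDiffAt.analyticAt

variable [PreconnectedSpace E]

lemma dense_setOf_ne_zero_of_analyticOnNhd {u : E → F} (hu : AnalyticOnNhd 𝕜 u Set.univ)
    (hu0 : u ≠ 0) : Dense {x | u x ≠ 0} := by
  intro x
  rw [mem_closure_iff_frequently]
  intro hzero
  have hzero' : u =ᶠ[𝓝 x] 0 := hzero.mono fun y hy => not_not.1 hy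
  exact hu0 (hu.eq_of_eventuallyEq analyticOnNhd_const hzero')

lemma dense_setOf_forall_ne_zero_of_analyticOnNhd {ι : Type*} [Finite ι] {u : ι → E → F}
    (hu : ∀ i, AnalyticOnNhd 𝕜 (u i) Set.univ) (hu0 : ∀ i, u i ≠ 0) :
    Dense {x | ∀ i, u i x ≠ 0} := by
  rw [Set.ofPred_forall, ← Set.sInter_range]
  exact (Set.finite_range _).dense_sInter
    (Set.forall_mem_range.2 fun i => isOpen_ne_fun (hu i).continuous continuous_const)
    (Set.forall_mem_range.2 fun i => dense_setOf_ne_zero_of_analyticOnNhd (hu i) (hu0 i))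

end ZeroSet

section RiemannExtension

variable {E F : Type*} [NormedAddCommGroup E] [NormedSpace ℂ E]

lemma exists_line_ne_zero_on_sphere {h : E → ℂ} {a : E} (hh : AnalyticAt ℂ h a)
    (hne : a ∈ closure {x | h x ≠ 0}) {N : Set E} (hN : N ∈ 𝓝 a) :
    ∃ (v : E) (ρ : ℝ), 0 < ρ ∧ (∀ z ∈ closedBall (0 : ℂ) ρ, a + z • v ∈ N) ∧
      ∀ z ∈ sphere (0 : ℂ) ρ, h (a + z • v) ≠ 0 := by
  obtain ⟨δ, hδ, hhδ⟩ := hh.exists_ball_analyticOnNhd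
  obtain ⟨b, hb, hbδ⟩ := mem_closure_iff_nhds_basis nhds_basis_ball |>.1 hne δ hδ
  have hline : Continuous fun z : ℂ => a + z • (b - a) := by fun_prop
  have hu : AnalyticOnNhd ℂ (fun z : ℂ => h (a + z • (b - a))) (closedBall 0 1) := by
    intro z hz
    refine (hhδ _ ?_).comp (f := fun z : ℂ => a + z • (b - a)) (by fun_prop)
    rw [mem_ball_iff_norm] at hbδ ⊢
    rw [add_sub_cancel_left, norm_smul]
    exact (mul_le_of_le_one_left (norm_nonneg _) (by simpa using hz)).trans_lt hbδ
  have hzeros : ∀ᶠ z in 𝓝[≠] (0 : ℂ), h (a + z • (b - a)) ≠ 0 :=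
    eventually_nhdsNE_ne_zero_of_isPreconnected hu (convex_closedBall 0 1).isPreconnected
      (z₀ := 1) (by simp) (by simpa using hb) (by simp)
  have hmem : ∀ᶠ z in 𝓝 (0 : ℂ), a + z • (b - a) ∈ N :=
    hline.continuousAt.eventually_mem (by simpa using hN)
  obtain ⟨ρ, hρ, hball⟩ := nhds_basis_closedBall.eventually_iff.1
    (hmem.and (eventually_nhdsWithin_iff.1 hzeros))
  exact ⟨b - a, ρ, hρ, fun z hz => (hball hz).1, fun z hz =>
    (hball (sphere_subset_closedBall hz)).2 (ne_of_mem_sphere hz hρ.ne')⟩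

variable [NormedAddCommGroup F] [NormedSpace ℂ F] [CompleteSpace F]

lemma circleAverage_comp_add_smul_eq_of_bounded {h : E → ℂ} {f : E → F} {N : Set E} (hN : IsOpen N)
    (hh : AnalyticOnNhd ℂ h N) (hf : ∀ x ∈ N, h x ≠ 0 → AnalyticAt ℂ f x) {C : ℝ}
    (hC : ∀ x ∈ N, h x ≠ 0 → ‖f x‖ ≤ C) {x v : E} {ρ : ℝ}
    (hline : ∀ z ∈ closedBall (0 : ℂ) |ρ|, x + z • v ∈ N)
    (hsphere : ∀ z ∈ sphere (0 : ℂ) |ρ|, h (x + z • v) ≠ 0) (hx : h x ≠ 0) :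
    Real.circleAverage (fun z => f (x + z • v)) 0 ρ = f x := by
  have hdiff : ∀ z, x + z • v ∈ N → h (x + z • v) ≠ 0 →
      DifferentiableAt ℂ (fun z : ℂ => f (x + z • v)) z := fun z hzN hz =>
    (hf _ hzN hz).differentiableAt.comp z (f := fun z : ℂ => x + z • v) (by fun_prop)
  have hu : AnalyticOnNhd ℂ (fun z : ℂ => h (x + z • v)) (closedBall 0 |ρ|) := fun z hz =>
    (hh _ (hline z hz)).comp (f := fun z : ℂ => x + z • v) (by fun_prop)
  have hgood : ∀ z ∈ closedBall (0 : ℂ) |ρ|,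
      ∀ᶠ y in 𝓝[≠] z, x + y • v ∈ N ∧ h (x + y • v) ≠ 0 := by
    intro z hz
    have hmem : ∀ᶠ y in 𝓝 z, x + y • v ∈ N :=
      ContinuousAt.eventually_mem (f := fun y : ℂ => x + y • v) (by fun_prop)
        (hN.mem_nhds (hline z hz))
    exact hmem.filter_mono nhdsWithin_le_nhds |>.and <|
      eventually_nhdsNE_ne_zero_of_isPreconnected hu (convex_closedBall 0 |ρ|).isPreconnected
        (mem_closedBall_self (abs_nonneg ρ)) (by simpa using hx) hz
  have h0 := hline 0 (mem_closedBall_self (abs_nonneg ρ))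
  simpa using circleAverage_eq_of_bounded_nhdsNE (w := fun z : ℂ => f (x + z • v)) (c := 0) (ρ := ρ)
    (fun z hz => (hgood z hz).mono fun y hy => hdiff y hy.1 hy.2)
    (fun z hz => isBoundedUnder_of_eventually_le (a := C) <|
      (hgood z hz).mono fun y hy => hC _ hy.1 hy.2)
    (hdiff 0 h0 (by simpa using hx)).continuousAt
    (fun z hz => (hdiff z (hline z (sphere_subset_closedBall hz)) (hsphere z hz)).continuousAt)

theorem exists_analyticAt_eventuallyEq_of_isBoundedUnder {h : E → ℂ} {f : E → F} {a : E}
    (hh : AnalyticAt ℂ h a) (hne : a ∈ closure {x | h x ≠ 0})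
    (hf : ∀ᶠ x in 𝓝[{x | h x ≠ 0}] a, AnalyticAt ℂ f x)
    (hb : IsBoundedUnder (· ≤ ·) (𝓝[{x | h x ≠ 0}] a) fun x => ‖f x‖) :
    ∃ g : E → F, AnalyticAt ℂ g a ∧ f =ᶠ[𝓝[{x | h x ≠ 0}] a] g := by
  obtain ⟨C, hC⟩ := hb
  rw [eventually_map] at hC
  obtain ⟨N, hN, hNo, haN⟩ := _root_.eventually_nhds_iff.1 (hh.eventually_analyticAt.and
    ((eventually_nhdsWithin_iff.1 hf).and (eventually_nhdsWithin_iff.1 hC)))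
  have hhN : AnalyticOnNhd ℂ h N := fun x hx => (hN x hx).1
  obtain ⟨v, ρ, hρ, hdisc, hsphere⟩ := exists_line_ne_zero_on_sphere hh hne (hNo.mem_nhds haN)
  rw [← abs_of_pos hρ] at hdisc hsphere
  have hline : Continuous fun q : E × ℂ => q.1 + q.2 • v := by fun_prop
  have hdisc' : ∀ᶠ x in 𝓝 a, ∀ z ∈ closedBall (0 : ℂ) |ρ|, x + z • v ∈ N :=
    (isCompact_closedBall 0 |ρ|).eventually_forall_of_forall_eventually fun z hz =>
      hline.continuousAt.eventually_mem (hNo.mem_nhds (hdisc z hz))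
  have hsphere' : ∀ᶠ x in 𝓝 a, ∀ z ∈ sphere (0 : ℂ) |ρ|, h (x + z • v) ≠ 0 :=
    (isCompact_sphere 0 |ρ|).eventually_forall_of_forall_eventually fun z hz =>
      (ContinuousAt.comp (f := fun q : E × ℂ => q.1 + q.2 • v)
        (hhN _ (hdisc z (sphere_subset_closedBall hz))).continuousAt
        hline.continuousAt).eventually_ne (hsphere z hz)
  refine ⟨fun x => Real.circleAverage (fun z => f (x + z • v)) 0 ρ,
    analyticAt_circleAverage_comp_add_smul fun z hz =>
      (hN _ (hdisc z (sphere_subset_closedBall hz))).2.1 (hsphere z hz),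
    eventually_nhdsWithin_iff.2 ?_⟩
  filter_upwards [hdisc', hsphere'] with x hxd hxs hx
  exact (circleAverage_comp_add_smul_eq_of_bounded hNo hhN (fun x hx => (hN x hx).2.1)
    (fun x hx => (hN x hx).2.2) hxd hxs hx).symm

theorem exists_analyticOnNhd_eqOn_of_isBoundedUnder {h : E → ℂ} {f : E → F} {Ω : Set E}
    (hΩ : IsOpen Ω) (hh : AnalyticOnNhd ℂ h Ω) (hne : Ω ⊆ closure {x | h x ≠ 0})
    (hf : AnalyticOnNhd ℂ f (Ω ∩ {x | h x ≠ 0}))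
    (hb : ∀ a ∈ Ω, IsBoundedUnder (· ≤ ·) (𝓝[{x | h x ≠ 0}] a) fun x => ‖f x‖) :
    ∃ f' : E → F, AnalyticOnNhd ℂ f' Ω ∧ Set.EqOn f f' (Ω ∩ {x | h x ≠ 0}) := by
  have hneBot : ∀ x ∈ Ω, (𝓝[{x | h x ≠ 0}] x).NeBot := fun x hx =>
    mem_closure_iff_nhdsWithin_neBot.1 (hne hx)
  -- Defining the extension pointwise as a limit makes gluing the local extensions unnecessary.
  refine ⟨fun x => limUnder (𝓝[{x | h x ≠ 0}] x) f, fun a ha => ?_, fun a ha => ?_⟩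
  · obtain ⟨g, hg, hfg⟩ := exists_analyticAt_eventuallyEq_of_isBoundedUnder (hh a ha) (hne ha)
      (eventually_nhdsWithin_iff.2 <| by
        filter_upwards [hΩ.mem_nhds ha] with x hx hx' using hf x ⟨hx, hx'⟩) (hb a ha)
    refine hg.congr ?_
    filter_upwards [hg.eventually_analyticAt, hΩ.mem_nhds ha,
      eventually_eventually_nhds.2 (eventually_nhdsWithin_iff.1 hfg)] with x hgx hx hfgx
    have := hneBot x hx
    have hfgx' : f =ᶠ[𝓝[{x | h x ≠ 0}] x] g := eventually_nhdsWithin_iff.2 hfgx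
    exact ((hgx.continuousAt.mono_left nhdsWithin_le_nhds).congr' hfgx'.symm).limUnder_eq.symm
  · have := hneBot a ha.1
    exact ((hf a ha).continuousAt.mono_left nhdsWithin_le_nhds).limUnder_eq.symm

end RiemannExtension

theorem stmt0_general {ι E F : Type*} [Finite ι] [NormedAddCommGroup E] [NormedSpace ℂ E]
    [NormedAddCommGroup F] [NormedSpace ℂ F] [CompleteSpace F] {h : ι → E →ᴬ[ℂ] ℂ}
    (hh : ∀ i, h i ≠ 0) {Ω : Set E} (hΩ : IsOpen Ω) {f : E → F}
    (hf : AnalyticOnNhd ℂ f (Ω \ ⋃ i, {x | h i x = 0}))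
    (hb : ∀ a ∈ Ω, IsBoundedUnder (· ≤ ·) (𝓝[Ω \ ⋃ i, {x | h i x = 0}] a) fun x => ‖f x‖) :
    ∃ f' : E → F, AnalyticOnNhd ℂ f' Ω ∧ Set.EqOn f f' (Ω \ ⋃ i, {x | h i x = 0}) := by
  cases nonempty_fintype ι
  have hcompl : (⋃ i, {x | h i x = 0})ᶜ = {x | ∏ i, h i x ≠ 0} := by
    ext x
    simp [Finset.prod_ne_zero_iff]
  have hdense : Dense {x | ∏ i, h i x ≠ 0} := by
    simpa [Finset.prod_ne_zero_iff] using dense_setOf_forall_ne_zero_of_analyticOnNhd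
      (fun i x _ => analyticAt_continuousAffineMap (h i) x)
      fun i hi => hh i (DFunLike.coe_injective hi)
  rw [Set.sdiff_eq, hcompl] at hf hb ⊢
  refine exists_analyticOnNhd_eqOn_of_isBoundedUnder hΩ
    (fun x _ => Finset.analyticAt_fun_prod _ fun i _ => analyticAt_continuousAffineMap (h i) x)
    (fun x _ => hdense x) hf fun a ha => ?_
  rw [← nhdsWithin_inter_of_mem (mem_nhdsWithin_of_mem_nhds (hΩ.mem_nhds ha))]
  exact hb a ha

/-- Removable singularity along finitely many hyperplanes: if `f` is holomorphic and
bounded on the complement `U` of finitely many (affine) hyperplanes in a ball around `0`,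
and the product of `f` with finitely many affine functions `l i` extends holomorphically
to the ball, then `f` extends holomorphically to a neighborhood of `0`. -/
theorem stmt0 {E F : Type*} [NormedAddCommGroup E] [NormedSpace ℂ E] [FiniteDimensional ℂ E]
    [NormedAddCommGroup F] [NormedSpace ℂ F] [FiniteDimensional ℂ F]
    {r : ℝ} (hr : 0 < r) {ι κ : Type*} [Fintype ι] [Fintype κ]
    (h : ι → (E →ᵃ[ℂ] ℂ)) (hhyp : ∀ i, h i ≠ 0)
    (l : κ → (E →ᵃ[ℂ] ℂ))
    (U : Set E) (hU : U = Metric.ball 0 r \ ⋃ i, {x | h i x = 0})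
    (f : E → F) (hf : AnalyticOnNhd ℂ f U)
    (C : ℝ) (hbd : ∀ x ∈ U, ‖f x‖ ≤ C)
    (g : E → F) (hg : AnalyticOnNhd ℂ g (Metric.ball 0 r))
    (hgf : ∀ x ∈ U, g x = (∏ i, l i x) • f x) :
    ∃ (V : Set E) (f' : E → F), V ∈ nhds (0 : E) ∧ AnalyticOnNhd ℂ f' V ∧
      Set.EqOn f f' (U ∩ V) := by
  obtain ⟨f', hf', heq⟩ := stmt0_general
    (h := fun i => ⟨h i, (h i).continuous_of_finiteDimensional⟩)
    (fun i hi => hhyp i (congrArg ContinuousAffineMap.toAffineMap hi)) Metric.isOpen_ball (hU ▸ hf)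
    fun a _ => Filter.isBoundedUnder_of_eventually_le (a := C) <|
      Filter.eventually_of_mem self_mem_nhdsWithin (hU ▸ hbd)
  exact ⟨_, f', Metric.ball_mem_nhds 0 hr, hf', hU ▸ heq.mono Set.inter_subset_left⟩
end

section
/- Let E be a finite-dimensional complex vector space and f a bounded holomorphic function on the complement of the zero set of an affine function l (with l(0)=0) in a neighborhood of 0, such that l·f extends holomorphically to a neighborhood of 0 as a function g. Then g vanishes on the hyperplane {l=0} near 0, and f extends holomorphically to a neighborhood of 0. -/
/-!
Hadamard's lemma holds for analytic functions: `g x - g y = H (x, y) (x - y)` for an analytic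
operator-valued `H`, whose power series comes from telescoping `pₙ(x, …, x) - pₙ(y, …, y)`.
If `g` vanishes on `{l = 0}`, take for `y` the projection of `x` to that hyperplane along a vector
`e` with `l (x + t • e) = l x + t`: then `x - y = l x • e`, hence `g x = l x • H (x, y) e`, and
`f = g / l` agrees with an analytic function off the hyperplane. That `g` vanishes on `{l = 0}`
follows from `‖g‖ ≤ C ‖l‖` off the hyperplane by continuity.
-/

open Filter Set Topology

section Hadamard

variable {𝕜 E F : Type*} [NontriviallyNormedField 𝕜]
  [NormedAddCommGroup E] [NormedSpace 𝕜 E] [NormedAddCommGroup F] [NormedSpace 𝕜 F]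

/-- The divided difference of a homogeneous polynomial: for `m` multilinear in `n + 1` variables,
the operator `∑ i, m (x, …, x, ·, y, …, y)` with the free slot in position `i`, encoded as a
multilinear map in `n` copies of the pair `(x, y)`. -/
noncomputable def multilinearDividedDifference {n : ℕ} (m : E [×(n + 1)]→L[𝕜] F) :
    (E × E) [×n]→L[𝕜] (E →L[𝕜] F) :=
  ∑ i : Fin (n + 1), (m.curryMid i).flipMultilinear.compContinuousLinearMap fun j ↦
    if j.castSucc < i then ContinuousLinearMap.fst 𝕜 E E else ContinuousLinearMap.snd 𝕜 E E

theorem multilinearDividedDifference_apply_sub {n : ℕ} (m : E [×(n + 1)]→L[𝕜] F) (x y : E) :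
    multilinearDividedDifference m (fun _ ↦ (x, y)) (x - y) = m (fun _ ↦ x) - m (fun _ ↦ y) := by
  have telescope := m.toMultilinearMap.map_sub_map_piecewise (fun _ ↦ x) (fun _ ↦ y) Finset.univ
  simp only [Finset.piecewise_univ, Finset.mem_univ, true_imp_iff,
    ContinuousMultilinearMap.coe_coe] at telescope
  rw [telescope]
  simp only [multilinearDividedDifference, sum_apply,
    ContinuousMultilinearMap.compContinuousLinearMap_apply,
    ContinuousLinearMap.flipMultilinear_apply_apply, ContinuousMultilinearMap.curryMid_apply]
  refine Finset.sum_congr rfl fun i _ ↦ congrArg m ?_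
  refine Fin.insertNth_eq_iff.2 ⟨by simp, funext fun j ↦ ?_⟩
  simp only [Fin.removeNth, Fin.succAbove_lt_iff_castSucc_lt, (Fin.succAbove_ne i j).symm, if_false]
  split_ifs <;> rfl

theorem norm_flipMultilinear_le {ι G : Type*} [Fintype ι] {E' : ι → Type*}
    [NormedAddCommGroup G] [NormedSpace 𝕜 G]
    [∀ i, NormedAddCommGroup (E' i)] [∀ i, NormedSpace 𝕜 (E' i)]
    (f : G →L[𝕜] ContinuousMultilinearMap 𝕜 E' F) : ‖f.flipMultilinear‖ ≤ ‖f‖ :=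
  MultilinearMap.mkContinuous_norm_le _ (norm_nonneg f) _

theorem norm_multilinearDividedDifference_le {n : ℕ} (m : E [×(n + 1)]→L[𝕜] F) :
    ‖multilinearDividedDifference m‖ ≤ (n + 1) * ‖m‖ := by
  suffices ‖multilinearDividedDifference m‖ ≤ ∑ _ : Fin (n + 1), ‖m‖ by simpa using this
  refine norm_sum_le_of_le (E := (E × E) [×n]→L[𝕜] (E →L[𝕜] F)) _ fun i _ ↦ ?_
  refine (ContinuousMultilinearMap.norm_compContinuousLinearMap_le _ _).trans ?_
  have norm_curry_le : ‖(m.curryMid i).flipMultilinear‖ ≤ ‖m‖ :=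
    (norm_flipMultilinear_le _).trans_eq (m.norm_curryMid i)
  refine (mul_le_of_le_one_right (norm_nonneg _) ?_).trans norm_curry_le
  refine Finset.prod_le_one (fun _ _ ↦ norm_nonneg _) fun j _ ↦ ?_
  split_ifs
  exacts [ContinuousLinearMap.norm_fst_le 𝕜 E E, ContinuousLinearMap.norm_snd_le 𝕜 E E]

theorem radius_le_radius_of_norm_le_succ_mul {E' F' : Type*}
    [NormedAddCommGroup E'] [NormedSpace 𝕜 E'] [NormedAddCommGroup F'] [NormedSpace 𝕜 F']
    {p : FormalMultilinearSeries 𝕜 E F} {q : FormalMultilinearSeries 𝕜 E' F'}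
    (h : ∀ n : ℕ, ‖q n‖ ≤ (n + 1) * ‖p n‖) : p.radius ≤ q.radius := by
  refine ENNReal.le_of_forall_nnreal_lt fun r hr ↦ ?_
  obtain ⟨a, ⟨ha₀, ha₁⟩, C, -, hC⟩ := p.norm_mul_pow_le_mul_pow_of_lt_radius hr
  have tendsto_bound : Tendsto (fun n : ℕ ↦ C * (n * a ^ n + a ^ n)) atTop (𝓝 0) := by
    simpa using ((tendsto_self_mul_const_pow_of_lt_one ha₀.le ha₁).add
      (tendsto_pow_atTop_nhds_zero_of_lt_one ha₀.le ha₁)).const_mul C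
  refine q.le_radius_of_tendsto
    (squeeze_zero (fun n ↦ by positivity) (fun n ↦ ?_) tendsto_bound)
  calc ‖q n‖ * (r : ℝ) ^ n ≤ (n + 1) * ‖p n‖ * (r : ℝ) ^ n := by gcongr; exact h n
    _ = (n + 1) * (‖p n‖ * (r : ℝ) ^ n) := mul_assoc _ _ _
    _ ≤ (n + 1) * (C * a ^ n) := mul_le_mul_of_nonneg_left (hC n) (by positivity)
    _ = C * (n * a ^ n + a ^ n) := by ring

/-- The divided difference of a power series: if `p` represents `g` at `a`, the power series at
`(a, a)` of an operator-valued function `H` with `g x - g y = H (x, y) (x - y)`. Dividing by `x - y`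
lowers the degree by one. -/
noncomputable def dividedDifferenceSeries (p : FormalMultilinearSeries 𝕜 E F) :
    FormalMultilinearSeries 𝕜 (E × E) (E →L[𝕜] F) :=
  fun n ↦ multilinearDividedDifference (p (n + 1))

theorem radius_le_radius_dividedDifferenceSeries (p : FormalMultilinearSeries 𝕜 E F) :
    p.radius ≤ (dividedDifferenceSeries p).radius := by
  rw [← p.radius_shift]
  refine radius_le_radius_of_norm_le_succ_mul fun n ↦ ?_
  simpa [dividedDifferenceSeries, FormalMultilinearSeries.shift] using
    norm_multilinearDividedDifference_le (p (n + 1))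

theorem sub_eq_dividedDifferenceSeries_sum_apply_sub [CompleteSpace F] {g : E → F} {a x y : E}
    {p : FormalMultilinearSeries 𝕜 E F} {r : ENNReal} (hg : HasFPowerSeriesOnBall g p a r)
    (hx : x ∈ Metric.eball 0 r) (hy : y ∈ Metric.eball 0 r) :
    g (a + x) - g (a + y) = (dividedDifferenceSeries p).sum (x, y) (x - y) := by
  have hxy : (x, y) ∈ Metric.eball (0 : E × E) (dividedDifferenceSeries p).radius := by
    refine Metric.eball_subset_eball
      (hg.r_le.trans (radius_le_radius_dividedDifferenceSeries p)) ?_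
    exact Metric.eball_prod_same (0 : E) (0 : E) r ▸ mk_mem_prod hx hy
  have hasSum_apply : HasSum (fun n ↦ p (n + 1) (fun _ ↦ x) - p (n + 1) fun _ ↦ y)
      ((dividedDifferenceSeries p).sum (x, y) (x - y)) := by
    simpa only [dividedDifferenceSeries, ContinuousLinearMap.apply_apply,
      multilinearDividedDifference_apply_sub] using
      ((dividedDifferenceSeries p).hasSum hxy).mapL (ContinuousLinearMap.apply 𝕜 F (x - y))
  have hasSum_sub := (hasSum_nat_add_iff' 1).2 ((hg.hasSum hx).sub (hg.hasSum hy))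
  have zeroth_eq : p 0 (fun _ ↦ x) = p 0 fun _ ↦ y := congrArg (p 0) (Subsingleton.elim _ _)
  simpa [zeroth_eq] using hasSum_sub.unique hasSum_apply

theorem exists_analyticAt_sub_eq_apply_sub [CompleteSpace F] {g : E → F} {a : E}
    (hg : AnalyticAt 𝕜 g a) :
    ∃ H : E × E → E →L[𝕜] F, AnalyticAt 𝕜 H (a, a) ∧
      ∀ᶠ z in 𝓝 (a, a), g z.1 - g z.2 = H z (z.1 - z.2) := by
  obtain ⟨p, r, hp⟩ := hg
  have radius_pos : 0 < (dividedDifferenceSeries p).radius :=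
    hp.radius_pos.trans_le (radius_le_radius_dividedDifferenceSeries p)
  refine ⟨fun z ↦ (dividedDifferenceSeries p).sum (z - (a, a)), ?_, ?_⟩
  · simpa using
      (((dividedDifferenceSeries p).hasFPowerSeriesOnBall radius_pos).comp_sub (a, a)).analyticAt
  · filter_upwards [prod_mem_nhds (Metric.eball_mem_nhds a hp.r_pos)
      (Metric.eball_mem_nhds a hp.r_pos)] with z ⟨h₁, h₂⟩
    have mem_eball_zero {x : E} (hx : x ∈ Metric.eball a r) : x - a ∈ Metric.eball 0 r := by
      simpa [edist_eq_enorm_sub] using hx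
    simpa [Prod.sub_def] using
      sub_eq_dividedDifferenceSeries_sum_apply_sub hp (mem_eball_zero h₁) (mem_eball_zero h₂)

end Hadamard

section Hyperplane

theorem exists_forall_map_add_smul_eq_add {𝕜 E : Type*} [Field 𝕜] [AddCommGroup E] [Module 𝕜 E]
    {l : E →ᵃ[𝕜] 𝕜} (hl : l ≠ 0) {a : E} (ha : l a = 0) :
    ∃ e, ∀ (x : E) (t : 𝕜), l (x + t • e) = l x + t := by
  obtain ⟨v, hv⟩ : ∃ v, l v ≠ 0 := by
    by_contra! h
    exact hl (AffineMap.ext h)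
  have linear_sub : l.linear (v - a) = l v := by
    simpa [ha] using l.linearMap_vsub v a
  refine ⟨(l v)⁻¹ • (v - a), fun x t ↦ ?_⟩
  rw [add_comm x, ← vadd_eq_add, l.map_vadd]
  simp [linear_sub, hv, add_comm]

variable {𝕜 E F : Type*} [NontriviallyNormedField 𝕜]
  [NormedAddCommGroup E] [NormedSpace 𝕜 E] [NormedAddCommGroup F] [NormedSpace 𝕜 F]
  {l : E →ᴬ[𝕜] 𝕜}

theorem dense_setOf_continuousAffineMap_ne_zero (hl : l ≠ 0) : Dense {x | l x ≠ 0} := by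
  intro a
  rcases ne_or_eq (l a) 0 with ha | ha
  · exact subset_closure ha
  obtain ⟨e, he⟩ := exists_forall_map_add_smul_eq_add
    (l := (l : E →ᵃ[𝕜] 𝕜)) (hl <| ContinuousAffineMap.toAffineMap_injective ·) ha
  have tendsto_line : Tendsto (fun t : 𝕜 ↦ a + t • e) (𝓝[≠] 0) (𝓝 a) :=
    (Continuous.tendsto' (by fun_prop) _ _ (by simp)).mono_left nhdsWithin_le_nhds
  refine mem_closure_of_tendsto tendsto_line ?_
  filter_upwards [self_mem_nhdsWithin] with t ht
  exact (he a t).trans_ne (by simpa [ha] using ht)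

theorem exists_analyticAt_eventuallyEq_smul [CompleteSpace F] (hl : l ≠ 0) {g : E → F} {a : E}
    (hg : AnalyticAt 𝕜 g a) (hgl : ∀ᶠ x in 𝓝 a, l x = 0 → g x = 0) :
    ∃ G : E → F, AnalyticAt 𝕜 G a ∧ g =ᶠ[𝓝 a] fun x ↦ l x • G x := by
  have analyticAt_l : AnalyticAt 𝕜 l a := by
    rw [l.decomp]
    exact (l.contLinear.analyticAt a).add analyticAt_const
  by_cases ha : l a = 0
  · obtain ⟨e, he⟩ := exists_forall_map_add_smul_eq_add
      (l := (l : E →ᵃ[𝕜] 𝕜)) (hl <| ContinuousAffineMap.toAffineMap_injective ·) ha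
    obtain ⟨H, hH, hgH⟩ := exists_analyticAt_sub_eq_apply_sub hg
    let proj (x : E) : E := x + (-l x) • e
    have proj_a : proj a = a := by simp [proj, ha]
    have analyticAt_proj : AnalyticAt 𝕜 proj a := by fun_prop
    have tendsto_proj : Tendsto proj (𝓝 a) (𝓝 a) := by
      simpa only [proj_a] using analyticAt_proj.continuousAt.tendsto
    refine ⟨fun x ↦ H (x, proj x) e, ?_, ?_⟩
    · have analyticAt_comp : AnalyticAt 𝕜 (fun x ↦ H (x, proj x)) a :=
        hH.comp_of_eq (analyticAt_id.prod analyticAt_proj) (congrArg (Prod.mk a) proj_a)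
      exact ((ContinuousLinearMap.apply 𝕜 F e).analyticAt _).comp analyticAt_comp
    · filter_upwards [(tendsto_id.prodMk_nhds tendsto_proj).eventually hgH,
        tendsto_proj.eventually hgl] with x hx hg_proj
      have l_proj : l (proj x) = 0 := (he x (-l x)).trans (add_neg_cancel _)
      have sub_proj : x - proj x = l x • e := by simp [proj]
      calc g x = g x - g (proj x) := by rw [hg_proj l_proj, sub_zero]
        _ = H (x, proj x) (x - proj x) := hx
        _ = l x • H (x, proj x) e := by rw [sub_proj, map_smul]
  · refine ⟨fun x ↦ (l x)⁻¹ • g x, (analyticAt_l.inv ha).smul hg, ?_⟩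
    filter_upwards [analyticAt_l.continuousAt.eventually_ne ha] with x hx
    rw [smul_inv_smul₀ hx]

end Hyperplane

theorem extendFrom_eventuallyEq {X Y : Type*} [TopologicalSpace X] [TopologicalSpace Y] [T2Space Y]
    {U : Set X} {f G : X → Y} {a : X} (hU : closure U ∈ 𝓝 a)
    (hG : ∀ᶠ x in 𝓝 a, ContinuousAt G x) (hfG : f =ᶠ[𝓝[U] a] G) :
    extendFrom U f =ᶠ[𝓝 a] G := by
  filter_upwards [hU, hG, eventually_nhds_nhdsWithin.2 hfG] with x hx hGx hfGx
  exact extendFrom_eq hx (hGx.continuousWithinAt.tendsto.congr' (EventuallyEq.symm hfGx))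

theorem exists_analyticOnNhd_eqOn_of_dense {𝕜 E F : Type*} [NontriviallyNormedField 𝕜]
    [NormedAddCommGroup E] [NormedSpace 𝕜 E]
    [NormedAddCommGroup F] [NormedSpace 𝕜 F] [CompleteSpace F]
    {s D : Set E} {f : E → F} (hD : Dense D)
    (h : ∀ a ∈ s, ∃ G : E → F, AnalyticAt 𝕜 G a ∧ f =ᶠ[𝓝[D] a] G) :
    ∃ f' : E → F, AnalyticOnNhd 𝕜 f' s ∧ EqOn f f' (s ∩ D) := by
  have extendFrom_eq_of_analyticAt {a : E} {G : E → F} (hG : AnalyticAt 𝕜 G a)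
      (hfG : f =ᶠ[𝓝[D] a] G) : extendFrom D f =ᶠ[𝓝 a] G :=
    extendFrom_eventuallyEq (by simp [hD.closure_eq])
      (hG.eventually_analyticAt.mono fun _ h ↦ h.continuousAt) hfG
  refine ⟨extendFrom D f, fun a ha ↦ ?_, fun a ⟨ha, haD⟩ ↦ ?_⟩
  · obtain ⟨G, hG, hfG⟩ := h a ha
    exact hG.congr (extendFrom_eq_of_analyticAt hG hfG).symm
  · obtain ⟨G, hG, hfG⟩ := h a ha
    exact (hfG.self_of_nhdsWithin haD).trans (extendFrom_eq_of_analyticAt hG hfG).self_of_nhds.symm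

theorem eq_zero_of_mem_closure_of_norm_le_mul {X F G : Type*} [TopologicalSpace X]
    [NormedAddCommGroup F] [SeminormedAddCommGroup G] {U : Set X} {g : X → F} {l : X → G} {x : X}
    {C : ℝ} (hx : x ∈ closure U) (hg : ContinuousWithinAt g U x) (hl : ContinuousWithinAt l U x)
    (hgl : ∀ y ∈ U, ‖g y‖ ≤ C * ‖l y‖) (hlx : l x = 0) : g x = 0 := by
  simpa [hlx] using ContinuousWithinAt.closure_le hx hg.norm (hl.norm.const_mul C) hgl

theorem stmt1_general {𝕜 E F : Type*} [NontriviallyNormedField 𝕜]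
    [NormedAddCommGroup E] [NormedSpace 𝕜 E]
    [NormedAddCommGroup F] [NormedSpace 𝕜 F] [CompleteSpace F]
    {s : Set E} (hs : IsOpen s) (l : E →ᴬ[𝕜] 𝕜) (hl : l ≠ 0)
    (f : E → F) (C : ℝ) (hbd : ∀ x ∈ s ∩ {x | l x ≠ 0}, ‖f x‖ ≤ C)
    (g : E → F) (hg : AnalyticOnNhd 𝕜 g s) (hgf : ∀ x ∈ s ∩ {x | l x ≠ 0}, g x = l x • f x) :
    (∀ x ∈ s, l x = 0 → g x = 0) ∧
      ∃ f' : E → F, AnalyticOnNhd 𝕜 f' s ∧ EqOn f f' (s ∩ {x | l x ≠ 0}) := by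
  have dense_ne_zero : Dense {x | l x ≠ 0} := dense_setOf_continuousAffineMap_ne_zero hl
  have norm_g_le : ∀ x ∈ s ∩ {x | l x ≠ 0}, ‖g x‖ ≤ C * ‖l x‖ := fun x hx ↦ by
    rw [hgf x hx, norm_smul, mul_comm]
    exact mul_le_mul_of_nonneg_right (hbd x hx) (norm_nonneg _)
  have g_eq_zero : ∀ x ∈ s, l x = 0 → g x = 0 := fun x hx ↦
    eq_zero_of_mem_closure_of_norm_le_mul (dense_ne_zero.open_subset_closure_inter hs hx)
      (hg x hx).continuousAt.continuousWithinAt l.continuous.continuousWithinAt norm_g_le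
  refine ⟨g_eq_zero, exists_analyticOnNhd_eqOn_of_dense dense_ne_zero fun a ha ↦ ?_⟩
  obtain ⟨G, hG, hgG⟩ := exists_analyticAt_eventuallyEq_smul hl (hg a ha)
    (mem_of_superset (hs.mem_nhds ha) g_eq_zero)
  refine ⟨G, hG, ?_⟩
  filter_upwards [nhdsWithin_le_nhds hgG, nhdsWithin_le_nhds (hs.mem_nhds ha),
    self_mem_nhdsWithin] with x hx hxs hlx
  exact smul_right_injective F hlx ((hgf x ⟨hxs, hlx⟩).symm.trans hx)

/-- One-hyperplane removable singularity: if `f` is bounded and holomorphic on the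
complement of the zero set of an affine function `l` (with `l 0 = 0`) in a ball around `0`,
and `l • f` extends to a holomorphic function `g` on the ball, then `g` vanishes on the
hyperplane `{l = 0}` near `0` and `f` extends holomorphically to a neighborhood of `0`. -/
theorem stmt1 {E F : Type*} [NormedAddCommGroup E] [NormedSpace ℂ E] [FiniteDimensional ℂ E]
    [NormedAddCommGroup F] [NormedSpace ℂ F] [FiniteDimensional ℂ F]
    {r : ℝ} (hr : 0 < r) (l : E →ᵃ[ℂ] ℂ) (hl0 : l 0 = 0) (hl : l ≠ 0)
    (U : Set E) (hU : U = {x ∈ Metric.ball (0 : E) r | l x ≠ 0})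
    (f : E → F) (hf : AnalyticOnNhd ℂ f U)
    (C : ℝ) (hbd : ∀ x ∈ U, ‖f x‖ ≤ C)
    (g : E → F) (hg : AnalyticOnNhd ℂ g (Metric.ball 0 r))
    (hgf : ∀ x ∈ U, g x = (l x) • f x) :
    ∃ V ∈ nhds (0 : E), (∀ x ∈ V, l x = 0 → g x = 0) ∧
      ∃ f' : E → F, AnalyticOnNhd ℂ f' V ∧ Set.EqOn f f' (U ∩ V) := by
  subst hU
  obtain ⟨hg0, f', hf', hff'⟩ := stmt1_general Metric.isOpen_ball
    (⟨l, l.continuous_of_finiteDimensional⟩ : E →ᴬ[ℂ] ℂ)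
    (fun h ↦ hl (congrArg ContinuousAffineMap.toAffineMap h)) f C hbd g hg hgf
  exact ⟨Metric.ball 0 r, Metric.ball_mem_nhds 0 hr, hg0, f', hf', hff'.mono inter_subset_left⟩
end
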